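/- Let d ≥ 1, C₀ > 0, c₀ > 0, and let h : (0,∞) → ℝ be smooth with h ≥ 0, h'(ρ) ≥ c₀, ρ h'(ρ) ≤ C₀ h(ρ) and ρ |h''(ρ)| ≤ C₀ h'(ρ) for all ρ > 0; let φ be smooth on (0,∞) with ρ φ'(ρ) = h'(ρ). Then there is a constant C, depending only on d, C₀ and c₀, such that every smooth ρ : T^d → (0,∞) satisfies ∫_{T^d} |∇²√ρ|² dx + ∫_{T^d} |∇(ρ^{1/4})|⁴ dx ≤ C ∫_{T^d} h(ρ) |∇²(φ(ρ))|² dx. -/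

import Mathlib

open MeasureTheory Real

noncomputable section

/-- Partial derivative of a scalar field in the coordinate direction `i`. -/
def pd {d : ℕ} (i : Fin d) (f : (Fin d → ℝ) → ℝ) (x : Fin d → ℝ) : ℝ :=
  fderiv ℝ f x (Pi.single i 1)

/-- Gradient of a scalar field. -/
def grad {d : ℕ} (f : (Fin d → ℝ) → ℝ) (x : Fin d → ℝ) : Fin d → ℝ :=
  fun i => pd i f x

/-- Divergence of a vector field. -/
def dvg {d : ℕ} (u : (Fin d → ℝ) → (Fin d → ℝ)) (x : Fin d → ℝ) : ℝ :=
  ∑ i, pd i (fun y => u y i) x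

/-- Row-wise divergence of a matrix field: `(dvgM M x) i = ∑ j, ∂_j M_{ij}`. -/
def dvgM {d : ℕ} (M : (Fin d → ℝ) → Fin d → Fin d → ℝ) (x : Fin d → ℝ) : Fin d → ℝ :=
  fun i => ∑ j, pd j (fun y => M y i j) x

/-- Hessian of a scalar field. -/
def hess {d : ℕ} (f : (Fin d → ℝ) → ℝ) (x : Fin d → ℝ) : Fin d → Fin d → ℝ :=
  fun i j => pd i (fun y => pd j f y) x

/-- Laplacian of a scalar field. -/
def lap {d : ℕ} (f : (Fin d → ℝ) → ℝ) (x : Fin d → ℝ) : ℝ :=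
  ∑ i, pd i (fun y => pd i f y) x

/-- Jacobian matrix of a vector field: `(jac u x) i j = ∂_j u_i`. -/
def jac {d : ℕ} (u : (Fin d → ℝ) → (Fin d → ℝ)) (x : Fin d → ℝ) : Fin d → Fin d → ℝ :=
  fun i j => pd j (fun y => u y i) x

/-- Symmetric part of the gradient of a vector field, `Du = (∇u + (∇u)ᵀ)/2`. -/
def symD {d : ℕ} (u : (Fin d → ℝ) → (Fin d → ℝ)) (x : Fin d → ℝ) : Fin d → Fin d → ℝ :=
  fun i j => (jac u x i j + jac u x j i) / 2

/-- Antisymmetric part of the gradient of a vector field, `Au = (∇u − (∇u)ᵀ)/2`. -/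
def antiD {d : ℕ} (u : (Fin d → ℝ) → (Fin d → ℝ)) (x : Fin d → ℝ) : Fin d → Fin d → ℝ :=
  fun i j => (jac u x i j - jac u x j i) / 2

/-- Tensor product of two vectors: `(a ⊗ b)_{ij} = a_i b_j`. -/
def tens {d : ℕ} (a b : Fin d → ℝ) : Fin d → Fin d → ℝ := fun i j => a i * b j

/-- ℤ^d-periodicity: a function of this kind descends to the torus `T^d = ℝ^d/ℤ^d`. -/
def SpacePeriodic {d : ℕ} {E : Type*} (f : (Fin d → ℝ) → E) : Prop :=
  ∀ x : Fin d → ℝ, ∀ n : Fin d → ℤ, f (x + fun i => (n i : ℝ)) = f x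

/-- Fundamental domain of the torus `T^d = ℝ^d/ℤ^d` (with its probability Lebesgue measure). -/
def unitBox (d : ℕ) : Set (Fin d → ℝ) := Set.Icc 0 1

/-!
Put `w = φ(ρ)`, so that `∇ρ = (ρ / h'(ρ)) ∇w`. The divergence of the periodic field `ρ |∇w|² ∇w` is
`(ρ / h'(ρ)) |∇w|⁴ + ρ (2 ⟨∇w, ∇²w ∇w⟩ + |∇w|² Δw)` and has integral zero, so the Cauchy–Schwarz and
Young inequalities give `∫ (ρ / h'(ρ)) |∇w|⁴ ≤ 2 (d + 4) ∫ ρ h'(ρ) |∇²w|²`.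

On the other hand `∇(ρ ^ s) = (s ρ ^ s / h'(ρ)) ∇w`. Differentiating once more and using
`ρ |h''(ρ)| ≤ C₀ h'(ρ)` and `h'(ρ) ≥ c₀`, both `|∇²√ρ|²` and `|∇(ρ ^ (1/4))|⁴` are bounded pointwise
by multiples of `ρ h'(ρ) |∇²w|²` and `(ρ / h'(ρ)) |∇w|⁴`. Finally `ρ h'(ρ) ≤ C₀ h(ρ)`.
-/

section LinearAlgebra

variable {ι κ : Type*} [Fintype ι] [Fintype κ]

/-- The squared Euclidean norm `|a|²` of a vector, written as a sum because the norm carried by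
`ι → ℝ` is the sup norm. -/
def euclSq (a : ι → ℝ) : ℝ := ∑ i, a i ^ 2

/-- The squared Frobenius norm `|A|²` of a matrix, given by its entries. -/
def frobSq (A : ι → κ → ℝ) : ℝ := ∑ i, ∑ j, A i j ^ 2

lemma frobSq_nonneg (A : ι → κ → ℝ) : 0 ≤ frobSq A :=
  Finset.sum_nonneg fun _ _ => Finset.sum_nonneg fun _ _ => sq_nonneg _

lemma euclSq_smul (c : ℝ) (a : ι → ℝ) : euclSq (c • a) = c ^ 2 * euclSq a := by
  simp only [euclSq, Pi.smul_apply, smul_eq_mul, mul_pow, Finset.mul_sum]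

lemma frobSq_smul (c : ℝ) (A : ι → κ → ℝ) : frobSq (c • A) = c ^ 2 * frobSq A := by
  simp only [frobSq, Pi.smul_apply, smul_eq_mul, mul_pow, Finset.mul_sum]

lemma frobSq_add_le (A B : ι → κ → ℝ) : frobSq (A + B) ≤ 2 * (frobSq A + frobSq B) := by
  simp only [frobSq, Pi.add_apply, ← Finset.sum_add_distrib, Finset.mul_sum]
  gcongr
  exact add_sq_le

lemma frobSq_tens {d : ℕ} (a b : Fin d → ℝ) : frobSq (tens a b) = euclSq a * euclSq b := by
  simp only [frobSq, tens, euclSq, mul_pow, Finset.sum_mul_sum]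

lemma sq_trace_le_card_mul_frobSq (A : ι → ι → ℝ) :
    (∑ i, A i i) ^ 2 ≤ Fintype.card ι * frobSq A :=
  calc (∑ i, A i i) ^ 2 ≤ Fintype.card ι * ∑ i, A i i ^ 2 := sq_sum_le_card_mul_sum_sq
    _ ≤ Fintype.card ι * frobSq A := by
      unfold frobSq
      gcongr with i
      exact Finset.single_le_sum (f := fun j => A i j ^ 2) (fun _ _ => sq_nonneg _)
        (Finset.mem_univ i)

lemma sq_bilin_le_euclSq_mul_frobSq (A : ι → κ → ℝ) (a : ι → ℝ) (b : κ → ℝ) :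
    (∑ i, ∑ j, a i * A i j * b j) ^ 2 ≤ euclSq a * euclSq b * frobSq A := by
  have cauchySchwarz := Finset.sum_mul_sq_le_sq_mul_sq Finset.univ
    (fun k : ι × κ => a k.1 * b k.2) (fun k => A k.1 k.2)
  simp only [Fintype.sum_prod_type, mul_pow, ← Finset.sum_mul_sum] at cauchySchwarz
  simpa only [euclSq, frobSq, mul_right_comm] using cauchySchwarz

lemma abs_two_mul_quadForm_add_trace_le {p : ℝ} (hp : 0 < p) (A : ι → ι → ℝ) (a : ι → ℝ) :
    |2 * (∑ i, ∑ j, a i * A i j * a j) + euclSq a * ∑ i, A i i|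
      ≤ euclSq a ^ 2 / (2 * p) + (Fintype.card ι + 4) * p * frobSq A := by
  have hA := frobSq_nonneg A
  have hQ := sq_bilin_le_euclSq_mul_frobSq A a a
  have hT := sq_trace_le_card_mul_frobSq A
  set Q := ∑ i, ∑ j, a i * A i j * a j
  set T := ∑ i, A i i
  refine abs_le_of_sq_le_sq ?_ (by positivity)
  calc (2 * Q + euclSq a * T) ^ 2
      ≤ 2 * ((2 * Q) ^ 2 + (euclSq a * T) ^ 2) := add_sq_le
    _ = 8 * Q ^ 2 + 2 * euclSq a ^ 2 * T ^ 2 := by ring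
    _ ≤ 8 * (euclSq a * euclSq a * frobSq A)
          + 2 * euclSq a ^ 2 * (Fintype.card ι * frobSq A) := by gcongr
    _ = 4 * (euclSq a ^ 2 / (2 * p)) * ((Fintype.card ι + 4) * p * frobSq A) := by
      field_simp
      ring
    _ ≤ (euclSq a ^ 2 / (2 * p) + (Fintype.card ι + 4) * p * frobSq A) ^ 2 :=
      four_mul_le_sq_add _ _

end LinearAlgebra

section Calculus

variable {d : ℕ} {f g : (Fin d → ℝ) → ℝ} {x : Fin d → ℝ}

lemma contDiff_grad {m n : WithTop ℕ∞} (hf : ContDiff ℝ n f) (hmn : m + 1 ≤ n) :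
    ContDiff ℝ m (grad f) :=
  contDiff_pi.2 fun _ => (hf.fderiv_right hmn).clm_apply contDiff_const

lemma differentiable_grad (hf : ContDiff ℝ 2 f) : Differentiable ℝ (grad f) :=
  (contDiff_grad hf one_add_one_eq_two.le).differentiable one_ne_zero

lemma continuous_euclSq_grad (hf : ContDiff ℝ 1 f) : Continuous fun x => euclSq (grad f x) :=
  continuous_finsetSum _ fun i _ =>
    (continuous_pi_iff.1 (contDiff_grad (m := 0) hf (zero_add 1).le).continuous i).pow 2

lemma continuous_frobSq_hess (hf : ContDiff ℝ 2 f) : Continuous fun x => frobSq (hess f x) := by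
  have hpd (j : Fin d) : ContDiff ℝ 1 (pd j f) :=
    contDiff_pi.1 (contDiff_grad hf one_add_one_eq_two.le) j
  exact continuous_finsetSum _ fun i _ => continuous_finsetSum _ fun j _ =>
    (continuous_pi_iff.1 (contDiff_grad (m := 0) (hpd j) (zero_add 1).le).continuous i).pow 2

lemma grad_comp {φ : ℝ → ℝ} {φ' : ℝ} (hφ : HasDerivAt φ φ' (f x)) (hf : DifferentiableAt ℝ f x) :
    grad (fun y => φ (f y)) x = φ' • grad f x := by
  ext i
  exact congrArg (· (Pi.single i 1)) (hφ.comp_hasFDerivAt x hf.hasFDerivAt).fderiv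

lemma grad_mul (hf : DifferentiableAt ℝ f x) (hg : DifferentiableAt ℝ g x) :
    grad (fun y => f y * g y) x = f x • grad g x + g x • grad f x := by
  ext i
  simp [grad, pd, fderiv_fun_mul hf hg]

lemma grad_euclSq {u : (Fin d → ℝ) → Fin d → ℝ} (hu : DifferentiableAt ℝ u x) :
    grad (fun y => euclSq (u y)) x = fun i => 2 * ∑ j, u x j * pd i (fun y => u y j) x := by
  have huj (j : Fin d) : DifferentiableAt ℝ (fun y => u y j) x := differentiableAt_pi.1 hu j
  ext i
  simp only [grad, pd, euclSq]
  rw [fderiv_fun_sum fun j _ => (huj j).fun_pow 2]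
  simp [fderiv_fun_pow _ (huj _), Finset.mul_sum, mul_assoc]

lemma dvg_smul {u : (Fin d → ℝ) → Fin d → ℝ} (hf : DifferentiableAt ℝ f x)
    (hu : DifferentiableAt ℝ u x) :
    dvg (fun y => f y • u y) x = ∑ i, grad f x i * u x i + f x * dvg u x := by
  simp only [dvg, Finset.mul_sum, ← Finset.sum_add_distrib]
  refine Finset.sum_congr rfl fun i _ => ?_
  have hprod := congrFun (grad_mul hf (differentiableAt_pi.1 hu i)) i
  simp only [grad, Pi.add_apply, Pi.smul_apply, smul_eq_mul] at hprod
  simp only [Pi.smul_apply, smul_eq_mul, hprod, grad]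
  ring

lemma dvg_mul_euclSq_grad_smul_grad (hf : DifferentiableAt ℝ f x)
    (hg : DifferentiableAt ℝ (grad g) x) :
    dvg (fun y => (f y * euclSq (grad g y)) • grad g y) x
      = euclSq (grad g x) * ∑ i, grad f x i * grad g x i
        + f x * (2 * (∑ i, ∑ j, grad g x i * hess g x i j * grad g x j)
          + euclSq (grad g x) * ∑ i, hess g x i i) := by
  have hsq : DifferentiableAt ℝ (fun y => euclSq (grad g y)) x :=
    DifferentiableAt.fun_sum fun i _ => (differentiableAt_pi.1 hg i).pow 2
  have hlap : dvg (grad g) x = ∑ i, hess g x i i := rfl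
  have hdot : ∑ i, grad (fun y => f y * euclSq (grad g y)) x i * grad g x i
      = euclSq (grad g x) * (∑ i, grad f x i * grad g x i)
        + f x * (2 * ∑ i, ∑ j, grad g x i * hess g x i j * grad g x j) := by
    rw [grad_mul hf hsq, grad_euclSq hg]
    simp only [Finset.mul_sum, ← Finset.sum_add_distrib]
    refine Finset.sum_congr rfl fun i _ => ?_
    simp only [Pi.add_apply, Pi.smul_apply, smul_eq_mul, add_mul, Finset.mul_sum, Finset.sum_mul]
    rw [add_comm, mul_assoc]
    congr 1
    refine Finset.sum_congr rfl fun j _ => ?_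
    simp only [hess, grad]
    ring
  rw [dvg_smul (hf.fun_mul hsq) hg, hdot, hlap]
  ring

lemma hess_of_grad_eq_smul {q : (Fin d → ℝ) → ℝ} (hfg : ∀ y, grad f y = q y • grad g y)
    (hq : DifferentiableAt ℝ q x) (hg : DifferentiableAt ℝ (grad g) x) :
    hess f x = q x • hess g x + tens (grad q x) (grad g x) := by
  ext i j
  have hpd : (fun y => pd j f y) = fun y => q y * pd j g y := funext fun y => congrFun (hfg y) j
  have hprod := congrFun (grad_mul hq (differentiableAt_pi.1 hg j)) i
  simp only [grad, Pi.add_apply, Pi.smul_apply, smul_eq_mul] at hprod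
  simp only [hess, hpd, hprod, tens, grad, Pi.add_apply, Pi.smul_apply, smul_eq_mul]
  ring

end Calculus

section Torus

variable {d : ℕ}

lemma SpacePeriodic.comp {E F : Type*} {f : (Fin d → ℝ) → E} (hf : SpacePeriodic f) (g : E → F) :
    SpacePeriodic fun x => g (f x) :=
  fun x n => congrArg g (hf x n)

protected lemma SpacePeriodic.grad {f : (Fin d → ℝ) → ℝ} (hf : SpacePeriodic f) :
    SpacePeriodic (grad f) := by
  intro x n
  ext i
  have hshift : (fun y => f (y + fun i => (n i : ℝ))) = f := funext fun y => hf y n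
  simp only [grad, pd]
  rw [← fderiv_comp_add_right, hshift]

lemma integrableOn_unitBox_of_continuous {f : (Fin d → ℝ) → ℝ} (hf : Continuous f) :
    IntegrableOn f (unitBox d) :=
  hf.continuousOn.integrableOn_compact isCompact_Icc

lemma continuous_dvg {u : (Fin d → ℝ) → Fin d → ℝ} (hu : ContDiff ℝ 1 u) :
    Continuous (dvg u) :=
  continuous_finsetSum _ fun i _ =>
    ((contDiff_pi.1 hu i).continuous_fderiv one_ne_zero).clm_apply continuous_const

lemma integral_dvg_eq_zero {u : (Fin d → ℝ) → Fin d → ℝ} (hu : ContDiff ℝ 1 u)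
    (hper : SpacePeriodic u) : ∫ x in unitBox d, dvg u x = 0 := by
  obtain _ | n := d
  · simp [dvg]
  have hui (i : Fin (n + 1)) : ContDiff ℝ 1 fun x => u x i := contDiff_pi.1 hu i
  have divergenceTheorem := integral_divergence_of_hasFDerivAt_off_countable'
    (0 : Fin (n + 1) → ℝ) 1 (fun _ => zero_le_one) (fun i x => u x i)
    (fun i x => fderiv ℝ (fun y => u y i) x) ∅ Set.countable_empty
    (fun i => (hui i).continuous.continuousOn)
    (fun x _ i => ((hui i).differentiable one_ne_zero x).hasFDerivAt)
    (integrableOn_unitBox_of_continuous (continuous_dvg hu))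
  refine divergenceTheorem.trans (Finset.sum_eq_zero fun i _ => sub_eq_zero.2 ?_)
  have hface (y : Fin n → ℝ) : i.insertNth (1 : ℝ) y
      = i.insertNth (0 : ℝ) y + fun k => ((Pi.single i 1 : Fin (n + 1) → ℤ) k : ℝ) := by
    ext k
    cases k using i.succAboveCases <;> simp
  simp only [Pi.one_apply, Pi.zero_apply, hface, hper _ (Pi.single i 1)]

end Torus

section WeightedEstimate

variable {d : ℕ} {ρ p w : (Fin d → ℝ) → ℝ}

lemma div_mul_euclSq_grad_sq_le {x : Fin d → ℝ} {P : ℝ} (hρ : DifferentiableAt ℝ ρ x)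
    (hw : DifferentiableAt ℝ (grad w) x) (hρ₀ : 0 ≤ ρ x) (hP : 0 < P)
    (hgrad : grad ρ x = (ρ x / P) • grad w x) :
    ρ x / P * euclSq (grad w x) ^ 2
      ≤ 2 * dvg (fun y => (ρ y * euclSq (grad w y)) • grad w y) x
        + 2 * (d + 4) * (ρ x * P * frobSq (hess w x)) := by
  have hdot : ∑ i, grad ρ x i * grad w x i = ρ x / P * euclSq (grad w x) := by
    simp only [hgrad, euclSq, Pi.smul_apply, smul_eq_mul, Finset.mul_sum, sq, mul_assoc]
  have hrem := mul_le_mul_of_nonneg_left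
    (neg_le_of_abs_le (abs_two_mul_quadForm_add_trace_le hP (hess w x) (grad w x))) hρ₀
  rw [Fintype.card_fin] at hrem
  rw [dvg_mul_euclSq_grad_smul_grad hρ hw, hdot]
  have hhalf : ρ x * (euclSq (grad w x) ^ 2 / (2 * P))
      = ρ x / P * euclSq (grad w x) ^ 2 / 2 := by
    field_simp
  linarith

theorem integral_div_mul_euclSq_grad_sq_le (hρ : ContDiff ℝ 1 ρ) (hw : ContDiff ℝ 2 w)
    (hp : Continuous p) (hρper : SpacePeriodic ρ) (hwper : SpacePeriodic w)
    (hρ₀ : ∀ x, 0 ≤ ρ x) (hp₀ : ∀ x, 0 < p x)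
    (hgrad : ∀ x, grad ρ x = (ρ x / p x) • grad w x) :
    ∫ x in unitBox d, ρ x / p x * euclSq (grad w x) ^ 2
      ≤ 2 * (d + 4) * ∫ x in unitBox d, ρ x * p x * frobSq (hess w x) := by
  set u := fun y => (ρ y * euclSq (grad w y)) • grad w y
  have hgradw : ContDiff ℝ 1 (grad w) := contDiff_grad hw one_add_one_eq_two.le
  have hu : ContDiff ℝ 1 u :=
    (hρ.mul (ContDiff.sum fun i _ => (contDiff_pi.1 hgradw i).pow 2)).smul hgradw
  have huper : SpacePeriodic u := fun x n => by simp only [u, hρper x n, hwper.grad x n]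
  have hS : Continuous fun x => euclSq (grad w x) :=
    continuous_euclSq_grad (hw.of_le one_le_two)
  have hleft : IntegrableOn (fun x => ρ x / p x * euclSq (grad w x) ^ 2) (unitBox d) :=
    integrableOn_unitBox_of_continuous ((hρ.continuous.div hp fun x => (hp₀ x).ne').mul (hS.pow 2))
  have hdvg := integrableOn_unitBox_of_continuous (continuous_dvg hu)
  have hright : IntegrableOn (fun x => ρ x * p x * frobSq (hess w x)) (unitBox d) :=
    integrableOn_unitBox_of_continuous ((hρ.continuous.mul hp).mul (continuous_frobSq_hess hw))
  calc ∫ x in unitBox d, ρ x / p x * euclSq (grad w x) ^ 2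
      ≤ ∫ x in unitBox d, (2 * dvg u x + 2 * (d + 4) * (ρ x * p x * frobSq (hess w x))) :=
        setIntegral_mono hleft ((hdvg.const_mul _).add (hright.const_mul _)) fun x =>
          div_mul_euclSq_grad_sq_le (hρ.differentiable one_ne_zero x) (differentiable_grad hw x)
            (hρ₀ x) (hp₀ x) (hgrad x)
    _ = 2 * (d + 4) * ∫ x in unitBox d, ρ x * p x * frobSq (hess w x) := by
      rw [integral_add (hdvg.const_mul _) (hright.const_mul _), integral_const_mul,
        integral_const_mul, integral_dvg_eq_zero hu huper, mul_zero, zero_add]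

end WeightedEstimate

section Powers

variable {d : ℕ} {ρ w : (Fin d → ℝ) → ℝ} {p : ℝ → ℝ} {x : Fin d → ℝ}

lemma grad_rpow (s : ℝ) {P : ℝ} {v : Fin d → ℝ} (hρ : DifferentiableAt ℝ ρ x) (hpos : 0 < ρ x)
    (hgrad : grad ρ x = (ρ x / P) • v) :
    grad (fun y => ρ y ^ s) x = (s * ρ x ^ s / P) • v := by
  rw [grad_comp (Real.hasDerivAt_rpow_const (Or.inl hpos.ne')) hρ, hgrad, smul_smul,
    Real.rpow_sub_one hpos.ne']
  congr 1
  field_simp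

lemma hess_rpow (s : ℝ) {p' : ℝ} (hρ : Differentiable ℝ ρ) (hw : DifferentiableAt ℝ (grad w) x)
    (hpos : ∀ y, 0 < ρ y) (hgrad : ∀ y, grad ρ y = (ρ y / p (ρ y)) • grad w y)
    (hp : HasDerivAt p p' (ρ x)) (hp₀ : p (ρ x) ≠ 0) :
    hess (fun y => ρ y ^ s) x = (s * ρ x ^ s / p (ρ x)) • (hess w x
      + ((s - ρ x * p' / p (ρ x)) / p (ρ x)) • tens (grad w x) (grad w x)) := by
  have hq := ((Real.hasDerivAt_rpow_const (p := s) (Or.inl (hpos x).ne')).const_mul s).fun_div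
    hp hp₀
  rw [hess_of_grad_eq_smul (fun y => grad_rpow s (hρ y) (hpos y) (hgrad y))
    (hq.differentiableAt.comp x (hρ x)) hw, grad_comp hq (hρ x), hgrad,
    Real.rpow_sub_one (hpos x).ne', smul_add]
  congr 1
  ext i j
  have hρx := (hpos x).ne'
  simp only [tens, Pi.smul_apply, smul_eq_mul]
  field_simp

lemma euclSq_grad_rpow (s : ℝ) {P : ℝ} {v : Fin d → ℝ} (hρ : DifferentiableAt ℝ ρ x)
    (hpos : 0 < ρ x) (hgrad : grad ρ x = (ρ x / P) • v) :
    euclSq (grad (fun y => ρ y ^ s) x)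
      = s ^ 2 * ρ x ^ (2 * s) / P ^ 2 * euclSq v := by
  rw [grad_rpow s hρ hpos hgrad, euclSq_smul, div_pow, mul_pow, ← Real.rpow_mul_natCast hpos.le,
    mul_comm s, Nat.cast_ofNat]

lemma frobSq_hess_rpow_le (s : ℝ) {p' K : ℝ} (hρ : Differentiable ℝ ρ)
    (hw : DifferentiableAt ℝ (grad w) x) (hpos : ∀ y, 0 < ρ y)
    (hgrad : ∀ y, grad ρ y = (ρ y / p (ρ y)) • grad w y)
    (hp : HasDerivAt p p' (ρ x)) (hp₀ : 0 < p (ρ x)) (hK : ρ x * |p'| ≤ K * p (ρ x)) :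
    frobSq (hess (fun y => ρ y ^ s) x)
      ≤ 2 * (s ^ 2 * ρ x ^ (2 * s) / p (ρ x) ^ 2)
        * (frobSq (hess w x) + (|s| + K) ^ 2 / p (ρ x) ^ 2 * euclSq (grad w x) ^ 2) := by
  have hcoef : (s - ρ x * p' / p (ρ x)) ^ 2 ≤ (|s| + K) ^ 2 := by
    refine sq_le_sq.2 (le_trans ?_ (le_abs_self _))
    calc |s - ρ x * p' / p (ρ x)| ≤ |s| + |ρ x * p' / p (ρ x)| := abs_sub _ _
      _ = |s| + ρ x * |p'| / p (ρ x) := by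
        rw [abs_div, abs_mul, abs_of_pos (hpos x), abs_of_pos hp₀]
      _ ≤ |s| + K := by gcongr; exact (div_le_iff₀ hp₀).2 hK
  have hpref : (s * ρ x ^ s / p (ρ x)) ^ 2 = s ^ 2 * ρ x ^ (2 * s) / p (ρ x) ^ 2 := by
    rw [div_pow, mul_pow, ← Real.rpow_mul_natCast (hpos x).le, mul_comm s, Nat.cast_ofNat]
  have hpref₀ : 0 ≤ s ^ 2 * ρ x ^ (2 * s) / p (ρ x) ^ 2 := hpref ▸ sq_nonneg _
  rw [hess_rpow s hρ hw hpos hgrad hp hp₀.ne', frobSq_smul, hpref]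
  set κ := s ^ 2 * ρ x ^ (2 * s) / p (ρ x) ^ 2
  set a := grad w x
  set β := (s - ρ x * p' / p (ρ x)) / p (ρ x) with hβ
  calc κ * frobSq (hess w x + β • tens a a)
      ≤ κ * (2 * (frobSq (hess w x) + frobSq (β • tens a a))) := by
        gcongr
        exact frobSq_add_le _ _
    _ = 2 * κ * (frobSq (hess w x)
          + (s - ρ x * p' / p (ρ x)) ^ 2 / p (ρ x) ^ 2 * euclSq a ^ 2) := by
        rw [frobSq_smul, frobSq_tens, hβ, div_pow]
        ring
    _ ≤ 2 * κ * (frobSq (hess w x) + (|s| + K) ^ 2 / p (ρ x) ^ 2 * euclSq a ^ 2) := by gcongr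

lemma euclSq_grad_rpow_quarter_sq {P : ℝ} {v : Fin d → ℝ} (hρ : DifferentiableAt ℝ ρ x)
    (hpos : 0 < ρ x) (hgrad : grad ρ x = (ρ x / P) • v) :
    euclSq (grad (fun y => ρ y ^ ((1 : ℝ) / 4)) x) ^ 2
      = 1 / 256 * (ρ x / P ^ 4 * euclSq v ^ 2) := by
  have hρ_sq : (ρ x ^ ((2 : ℝ) * (1 / 4))) ^ 2 = ρ x := by
    rw [← Real.rpow_mul_natCast hpos.le]
    norm_num
  rw [euclSq_grad_rpow (1 / 4) hρ hpos hgrad, mul_pow, div_pow, mul_pow, hρ_sq]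
  ring

lemma frobSq_hess_sqrt_le {p' K : ℝ} (hρ : Differentiable ℝ ρ) (hw : DifferentiableAt ℝ (grad w) x)
    (hpos : ∀ y, 0 < ρ y) (hgrad : ∀ y, grad ρ y = (ρ y / p (ρ y)) • grad w y)
    (hp : HasDerivAt p p' (ρ x)) (hp₀ : 0 < p (ρ x)) (hK : ρ x * |p'| ≤ K * p (ρ x)) :
    frobSq (hess (fun y => √(ρ y)) x)
      ≤ ρ x / (2 * p (ρ x) ^ 2)
        * (frobSq (hess w x) + (1 / 2 + K) ^ 2 / p (ρ x) ^ 2 * euclSq (grad w x) ^ 2) := by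
  simp only [Real.sqrt_eq_rpow]
  refine (frobSq_hess_rpow_le (1 / 2) hρ hw hpos hgrad hp hp₀ hK).trans_eq ?_
  rw [mul_one_div_cancel two_ne_zero, Real.rpow_one, abs_of_pos one_half_pos]
  ring

lemma frobSq_hess_sqrt_add_euclSq_grad_sq_le {p' K c : ℝ} (hρ : Differentiable ℝ ρ)
    (hw : DifferentiableAt ℝ (grad w) x) (hpos : ∀ y, 0 < ρ y)
    (hgrad : ∀ y, grad ρ y = (ρ y / p (ρ y)) • grad w y) (hp : HasDerivAt p p' (ρ x))
    (hc : 0 < c) (hcp : c ≤ p (ρ x)) (hK : ρ x * |p'| ≤ K * p (ρ x)) :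
    frobSq (hess (fun y => √(ρ y)) x) + euclSq (grad (fun y => ρ y ^ ((1 : ℝ) / 4)) x) ^ 2
      ≤ 1 / (2 * c ^ 3) * (ρ x * p (ρ x) * frobSq (hess w x))
        + (1 + 2 * K) ^ 2 / (4 * c ^ 3) * (ρ x / p (ρ x) * euclSq (grad w x) ^ 2) := by
  have hp₀ : 0 < p (ρ x) := hc.trans_le hcp
  have hρx := hpos x
  have hK₀ : 0 ≤ K := nonneg_of_mul_nonneg_left (le_trans (by positivity) hK) hp₀
  have hF := frobSq_nonneg (hess w x)
  have hsqrt := frobSq_hess_sqrt_le hρ hw hpos hgrad hp hp₀ hK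
  have hquarter := euclSq_grad_rpow_quarter_sq (hρ x) hρx (hgrad x)
  have hcoef : (1 + 2 * K) ^ 2 / 8 + 1 / 256 ≤ (1 + 2 * K) ^ 2 / 4 := by nlinarith
  set P := p (ρ x)
  set F := frobSq (hess w x)
  set S := euclSq (grad w x)
  calc _ ≤ ρ x / (2 * P ^ 2) * (F + (1 / 2 + K) ^ 2 / P ^ 2 * S ^ 2)
        + 1 / 256 * (ρ x / P ^ 4 * S ^ 2) := add_le_add hsqrt hquarter.le
    _ = 1 / (2 * P ^ 3) * (ρ x * P * F)
        + ((1 + 2 * K) ^ 2 / 8 + 1 / 256) / P ^ 3 * (ρ x / P * S ^ 2) := by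
      field_simp
      ring
    _ ≤ 1 / (2 * c ^ 3) * (ρ x * P * F)
        + (1 + 2 * K) ^ 2 / 4 / c ^ 3 * (ρ x / P * S ^ 2) := by gcongr
    _ = _ := by rw [div_div]

theorem integral_hess_sqrt_add_integral_grad_rpow_le {c K : ℝ} (hc : 0 < c)
    (hp : ContDiffOn ℝ 1 p (Set.Ioi 0)) (hcp : ∀ r, 0 < r → c ≤ p r)
    (hK : ∀ r, 0 < r → r * |deriv p r| ≤ K * p r)
    (hρ : ContDiff ℝ 2 ρ) (hw : ContDiff ℝ 2 w) (hρper : SpacePeriodic ρ)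
    (hwper : SpacePeriodic w) (hpos : ∀ x, 0 < ρ x)
    (hgrad : ∀ x, grad ρ x = (ρ x / p (ρ x)) • grad w x) :
    (∫ x in unitBox d, frobSq (hess (fun y => √(ρ y)) x))
        + (∫ x in unitBox d, euclSq (grad (fun y => ρ y ^ ((1 : ℝ) / 4)) x) ^ 2)
      ≤ (1 + (d + 4) * (1 + 2 * K) ^ 2) / (2 * c ^ 3)
        * ∫ x in unitBox d, ρ x * p (ρ x) * frobSq (hess w x) := by
  have hp₀ (x) : 0 < p (ρ x) := hc.trans_le (hcp _ (hpos x))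
  have hpρ : Continuous fun x => p (ρ x) := hp.continuousOn.comp_continuous hρ.continuous hpos
  have hp' (x) : HasDerivAt p (deriv p (ρ x)) (ρ x) :=
    ((hp.differentiableOn one_ne_zero).differentiableAt (Ioi_mem_nhds (hpos x))).hasDerivAt
  have hsqrt := integrableOn_unitBox_of_continuous
    (continuous_frobSq_hess (hρ.sqrt fun x => (hpos x).ne'))
  have hquarter : IntegrableOn
      (fun x => euclSq (grad (fun y => ρ y ^ ((1 : ℝ) / 4)) x) ^ 2) (unitBox d) :=
    integrableOn_unitBox_of_continuous ((continuous_euclSq_grad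
      ((hρ.of_le one_le_two).rpow_const_of_ne fun x => (hpos x).ne')).pow 2)
  have hF : IntegrableOn (fun x => ρ x * p (ρ x) * frobSq (hess w x)) (unitBox d) :=
    integrableOn_unitBox_of_continuous
      ((hρ.continuous.mul hpρ).mul (continuous_frobSq_hess hw))
  have hS : IntegrableOn (fun x => ρ x / p (ρ x) * euclSq (grad w x) ^ 2) (unitBox d) :=
    integrableOn_unitBox_of_continuous ((hρ.continuous.div hpρ fun x => (hp₀ x).ne').mul
      ((continuous_euclSq_grad (hw.of_le one_le_two)).pow 2))
  rw [← integral_add hsqrt hquarter]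
  calc _ ≤ ∫ x in unitBox d, (1 / (2 * c ^ 3) * (ρ x * p (ρ x) * frobSq (hess w x))
          + (1 + 2 * K) ^ 2 / (4 * c ^ 3) * (ρ x / p (ρ x) * euclSq (grad w x) ^ 2)) :=
        setIntegral_mono (hsqrt.add hquarter)
          (IntegrableOn.add (hF.const_mul _) (hS.const_mul _)) fun x =>
          frobSq_hess_sqrt_add_euclSq_grad_sq_le (hρ.differentiable two_ne_zero)
            (differentiable_grad hw x) hpos hgrad (hp' x) hc (hcp _ (hpos x)) (hK _ (hpos x))
    _ = 1 / (2 * c ^ 3) * (∫ x in unitBox d, ρ x * p (ρ x) * frobSq (hess w x))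
          + (1 + 2 * K) ^ 2 / (4 * c ^ 3)
            * ∫ x in unitBox d, ρ x / p (ρ x) * euclSq (grad w x) ^ 2 := by
      rw [integral_add (hF.const_mul _) (hS.const_mul _), integral_const_mul, integral_const_mul]
    _ ≤ 1 / (2 * c ^ 3) * (∫ x in unitBox d, ρ x * p (ρ x) * frobSq (hess w x))
          + (1 + 2 * K) ^ 2 / (4 * c ^ 3)
            * (2 * (d + 4) * ∫ x in unitBox d, ρ x * p (ρ x) * frobSq (hess w x)) := by
      gcongr
      exact integral_div_mul_euclSq_grad_sq_le (hρ.of_le one_le_two) hw hpρ hρper hwper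
        (fun x => (hpos x).le) hp₀ hgrad
    _ = _ := by ring

end Powers

section Potential

variable {p φ : ℝ → ℝ}

lemma hasDerivAt_div_of_mul_deriv_eq {r b : ℝ} (hr : r ≠ 0) (hb : b ≠ 0)
    (h : r * deriv φ r = b) : HasDerivAt φ (b / r) r := by
  rw [← h, mul_div_cancel_left₀ _ hr]
  exact (differentiableAt_of_deriv_ne_zero (right_ne_zero_of_mul (h ▸ hb))).hasDerivAt

lemma contDiffOn_two_of_hasDerivAt_div (hp : ContDiffOn ℝ 1 p (Set.Ioi 0))
    (hφ : ∀ r, 0 < r → HasDerivAt φ (p r / r) r) : ContDiffOn ℝ 2 φ (Set.Ioi 0) := by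
  rw [← one_add_one_eq_two, contDiffOn_succ_iff_deriv_of_isOpen isOpen_Ioi]
  refine ⟨fun r hr => (hφ r hr).differentiableAt.differentiableWithinAt, by simp, ?_⟩
  exact (hp.div contDiffOn_id fun r hr => (ne_of_gt hr : r ≠ 0)).congr fun r hr => (hφ r hr).deriv

lemma grad_eq_smul_grad_comp {d : ℕ} {ρ : (Fin d → ℝ) → ℝ} {x : Fin d → ℝ} {P : ℝ}
    (hφ : HasDerivAt φ (P / ρ x) (ρ x)) (hρ : DifferentiableAt ℝ ρ x) (hρ₀ : ρ x ≠ 0)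
    (hP : P ≠ 0) : grad ρ x = (ρ x / P) • grad (fun y => φ (ρ y)) x := by
  rw [grad_comp hφ hρ, smul_smul, div_mul_div_cancel₀ hP, div_self hρ₀, one_smul]

end Potential

theorem statement13_general {d : ℕ} {C₀ c₀ : ℝ} (hc₀ : 0 < c₀) {h φ : ℝ → ℝ}
    (hh : ContDiffOn ℝ 2 h (Set.Ioi 0)) (hlower : ∀ r, 0 < r → c₀ ≤ deriv h r)
    (hgrowth : ∀ r, 0 < r → r * deriv h r ≤ C₀ * h r)
    (hcurv : ∀ r, 0 < r → r * |deriv (deriv h) r| ≤ C₀ * deriv h r)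
    (hφ : ∀ r, 0 < r → HasDerivAt φ (deriv h r / r) r)
    {ρ : (Fin d → ℝ) → ℝ} (hρ : ContDiff ℝ 2 ρ) (hper : SpacePeriodic ρ) (hpos : ∀ x, 0 < ρ x) :
    (∫ x in unitBox d, ∑ i, ∑ j, hess (fun y => √(ρ y)) x i j ^ 2)
        + (∫ x in unitBox d, (∑ i, grad (fun y => ρ y ^ ((1 : ℝ) / 4)) x i ^ 2) ^ 2)
      ≤ (1 + (d + 4) * (1 + 2 * C₀) ^ 2) / (2 * c₀ ^ 3) * C₀
        * ∫ x in unitBox d, h (ρ x) * ∑ i, ∑ j, hess (fun y => φ (ρ y)) x i j ^ 2 := by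
  have hh' : ContDiffOn ℝ 1 (deriv h) (Set.Ioi 0) :=
    hh.deriv_of_isOpen isOpen_Ioi one_add_one_eq_two.le
  have hw : ContDiff ℝ 2 fun y => φ (ρ y) :=
    (contDiffOn_two_of_hasDerivAt_div hh' hφ).comp_contDiff hρ hpos
  have hgrad (x) : grad ρ x = (ρ x / deriv h (ρ x)) • grad (fun y => φ (ρ y)) x :=
    grad_eq_smul_grad_comp (hφ _ (hpos x)) (hρ.differentiable two_ne_zero x) (hpos x).ne'
      (hc₀.trans_le (hlower _ (hpos x))).ne'
  have hF := continuous_frobSq_hess hw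
  have hh'ρ := hh'.continuousOn.comp_continuous hρ.continuous hpos
  have hhρ := hh.continuousOn.comp_continuous hρ.continuous hpos
  refine (integral_hess_sqrt_add_integral_grad_rpow_le hc₀ hh' hlower hcurv hρ hw hper
    (hper.comp φ) hpos hgrad).trans ?_
  rw [mul_assoc, ← integral_const_mul C₀]
  gcongr ?_ * ?_
  refine setIntegral_mono
    (integrableOn_unitBox_of_continuous ((hρ.continuous.mul hh'ρ).mul hF))
    (integrableOn_unitBox_of_continuous (continuous_const.mul (hhρ.mul hF))) fun x => ?_
  rw [← mul_assoc C₀]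
  exact mul_le_mul_of_nonneg_right (hgrowth _ (hpos x)) (frobSq_nonneg _)

theorem statement13 (d : ℕ) (hd : 1 ≤ d) (C₀ c₀ : ℝ) (hC₀ : 0 < C₀) (hc₀ : 0 < c₀) :
    ∃ C : ℝ, 0 < C ∧
      ∀ h φ : ℝ → ℝ,
        ContDiffOn ℝ (⊤ : ℕ∞) h (Set.Ioi 0) →
        (∀ r : ℝ, 0 < r → 0 ≤ h r) →
        (∀ r : ℝ, 0 < r → c₀ ≤ deriv h r) →
        (∀ r : ℝ, 0 < r → r * deriv h r ≤ C₀ * h r) →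
        (∀ r : ℝ, 0 < r → r * |deriv (deriv h) r| ≤ C₀ * deriv h r) →
        ContDiffOn ℝ (⊤ : ℕ∞) φ (Set.Ioi 0) →
        (∀ r : ℝ, 0 < r → r * deriv φ r = deriv h r) →
      ∀ ρ : (Fin d → ℝ) → ℝ, ContDiff ℝ (⊤ : ℕ∞) ρ → SpacePeriodic ρ → (∀ x, 0 < ρ x) →
        (∫ x in unitBox d, ∑ i, ∑ j, hess (fun y => Real.sqrt (ρ y)) x i j ^ 2)
          + (∫ x in unitBox d, (∑ i, grad (fun y => ρ y ^ ((1 : ℝ) / 4)) x i ^ 2) ^ 2)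
          ≤ C * ∫ x in unitBox d, h (ρ x) * ∑ i, ∑ j, hess (fun y => φ (ρ y)) x i j ^ 2 := by
  refine ⟨(1 + (d + 4) * (1 + 2 * C₀) ^ 2) / (2 * c₀ ^ 3) * C₀, by positivity,
    fun h φ hh _ hlower hgrowth hcurv _ hφ ρ hρ hper hpos => ?_⟩
  exact statement13_general hc₀ (contDiffOn_infty.1 hh 2) hlower hgrowth hcurv
    (fun r hr => hasDerivAt_div_of_mul_deriv_eq hr.ne' (hc₀.trans_le (hlower r hr)).ne' (hφ r hr))
    (contDiff_infty.1 hρ 2) hper hpos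

end
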